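/- Let A and B be C*-algebras with ideals I ⊆ A and J ⊆ B, let X be an A–B-imprimitivity bimodule and Y an (A/I)–(B/J)-imprimitivity bimodule, and suppose there is a surjective linear map q : X → Y satisfying q(a·x) = p^A(a)·q(x), q(x·b) = q(x)·p^B(b), p^A(⟨x,y⟩_A) = ⟨q(x),q(y)⟩_{A/I}, and p^B(⟨x,y⟩_B) = ⟨q(x),q(y)⟩_{B/J} for all x, y ∈ X, a ∈ A, b ∈ B, where p^A : A → A/I and p^B : B → B/J are the quotient maps. Then I and J are paired under the Rieffel correspondence associated to X, i.e., I = X–Ind J. -/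

import Mathlib

/-!
Write `K` for the closed span of the elements `_A⟨x·c, y⟩` with `c ∈ J`, so the claim is `K = I`.

* `K ⊆ I`: the map `pA` sends `_A⟨x·c, y⟩` to `⟨q(x)·pB(c), q(y)⟩ = 0` when `c ∈ J = ker pB`,
  and `I` is a closed subspace.
* `I ⊆ K`: for `a ∈ I` one has `q(a·x) = pA(a)·q(x) = 0`, hence `⟨y, a·x'⟩_B ∈ ker pB = J`, and the
  imprimitivity identity gives
  `_A⟨x, y⟩ a _A⟨x', y'⟩ = _A⟨x·⟨y, a·x'⟩_B, y'⟩ ∈ K`.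
  By fullness, the inner products span a dense subspace of `A`, so `s a t ∈ K` for all `s, t ∈ A`;
  letting `s` and `t` run through an approximate unit of `A` yields `a ∈ K`
  (`mem_of_forall_mul_mul_mem`).
-/

/-!
Common framework for formalizing "Exactness and Fell bundles over groupoids" (Lalonde).

Since Fell bundles over groupoids, their full/reduced C*-algebras, groupoid crossed
products, etc. are far beyond current Mathlib, we axiomatize the relevant objects as
structures.  Deep analytic constructions (e.g. the reduced C*-algebra of a Fell bundle)
are recorded as *data* fields of these structures, pinned down by the characterizing
properties that are expressible at this level; predicates such as nuclearity, exactness,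
complete positivity, amenability, etc. are given genuine definitions.
-/

open Topology Matrix
open scoped ZeroAtInfty

noncomputable section

namespace FellPaper

/-- A bundled (possibly non-unital) complex C*-algebra. -/
structure CStarAlg : Type 1 where
  carrier : Type
  [alg : NonUnitalCStarAlgebra carrier]

attribute [instance] CStarAlg.alg

/-- A bundled complex Hilbert space. -/
structure HilbertCpx : Type 1 where
  carrier : Type
  [nacg : NormedAddCommGroup carrier]
  [ips : InnerProductSpace ℂ carrier]
  [complete : CompleteSpace carrier]

attribute [instance] HilbertCpx.nacg HilbertCpx.ips HilbertCpx.complete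

/-- A closed two-sided (hence automatically self-adjoint) ideal of a C*-algebra,
as a predicate on subsets. -/
structure IsCStarIdeal (A : CStarAlg) (I : Set A.carrier) : Prop where
  zero_mem : (0 : A.carrier) ∈ I
  add_mem : ∀ {a b : A.carrier}, a ∈ I → b ∈ I → a + b ∈ I
  smul_mem : ∀ (c : ℂ) {a : A.carrier}, a ∈ I → c • a ∈ I
  mul_left_mem : ∀ (a : A.carrier) {b : A.carrier}, b ∈ I → a * b ∈ I
  mul_right_mem : ∀ {a : A.carrier}, a ∈ I → ∀ b : A.carrier, a * b ∈ I
  star_mem : ∀ {a : A.carrier}, a ∈ I → star a ∈ I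
  isClosed : IsClosed I

/-- A pair of morphisms of C*-algebras forms a short exact sequence
`0 → A → B → C → 0`. -/
def IsSES {A B C : CStarAlg} (ι : A.carrier →⋆ₙₐ[ℂ] B.carrier)
    (π : B.carrier →⋆ₙₐ[ℂ] C.carrier) : Prop :=
  Function.Injective ι ∧ Function.Surjective π ∧
    Set.range ι = {b : B.carrier | π b = 0}

/-- A linear map between (not necessarily unital) complex *-algebras is completely
positive if all of its matrix amplifications send positive elements to positive
elements. -/
def IsCP {A B : Type} [NonUnitalRing A] [StarRing A] [Module ℂ A]
    [NonUnitalRing B] [StarRing B] [Module ℂ B] (φ : A →ₗ[ℂ] B) : Prop :=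
  ∀ (n : ℕ) (M : Matrix (Fin n) (Fin n) A),
    (∃ N : Matrix (Fin n) (Fin n) A, M = Nᴴ * N) →
      ∃ N' : Matrix (Fin n) (Fin n) B, M.map φ = N'ᴴ * N'

/-- The `n × n` complex matrix algebra, realized as operators on `ℂⁿ`. -/
abbrev MatAlg (n : ℕ) : Type :=
  EuclideanSpace ℂ (Fin n) →L[ℂ] EuclideanSpace ℂ (Fin n)

/-- Nuclearity of a C*-algebra: the identity map approximately factors through
matrix algebras by completely positive contractions (CPAP). -/
def NuclearCStar (A : CStarAlg) : Prop :=
  ∀ (F : Finset A.carrier) (ε : ℝ), 0 < ε →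
    ∃ (n : ℕ) (ψ : A.carrier →ₗ[ℂ] MatAlg n) (φ : MatAlg n →ₗ[ℂ] A.carrier),
      IsCP ψ ∧ IsCP φ ∧ (∀ a, ‖ψ a‖ ≤ ‖a‖) ∧ (∀ m, ‖φ m‖ ≤ ‖m‖) ∧
      ∀ a ∈ F, ‖φ (ψ a) - a‖ < ε

/-- Exactness of a C*-algebra, via Kirchberg's characterization: `A` is exact iff it is
nuclearly embeddable, i.e. it admits a faithful representation that approximately
factors through matrix algebras by completely positive contractions. -/
def ExactCStar (A : CStarAlg) : Prop :=
  ∃ (H : HilbertCpx) (π : A.carrier →⋆ₙₐ[ℂ] (H.carrier →L[ℂ] H.carrier)),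
    Function.Injective π ∧
    ∀ (F : Finset A.carrier) (ε : ℝ), 0 < ε →
      ∃ (n : ℕ) (ψ : A.carrier →ₗ[ℂ] MatAlg n)
        (φ : MatAlg n →ₗ[ℂ] (H.carrier →L[ℂ] H.carrier)),
        IsCP ψ ∧ IsCP φ ∧ (∀ a, ‖ψ a‖ ≤ ‖a‖) ∧ (∀ m, ‖φ m‖ ≤ ‖m‖) ∧
        ∀ a ∈ F, ‖φ (ψ a) - π a‖ < ε

/-- An `A`–`B`-imprimitivity bimodule: a full left Hilbert `A`-module and full right
Hilbert `B`-module structure on a Banach space `X` with compatible commuting actions. -/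
structure ImprimBimod (A B : CStarAlg) : Type 1 where
  X : Type
  [nacg : NormedAddCommGroup X]
  [nsp : NormedSpace ℂ X]
  [complete : CompleteSpace X]
  lsmul : A.carrier → X → X
  rsmul : X → B.carrier → X
  linner : X → X → A.carrier   -- `_A⟨x, y⟩`
  rinner : X → X → B.carrier   -- `⟨x, y⟩_B`
  lsmul_add : ∀ a x y, lsmul a (x + y) = lsmul a x + lsmul a y
  add_lsmul : ∀ a b x, lsmul (a + b) x = lsmul a x + lsmul b x
  mul_lsmul : ∀ a b x, lsmul (a * b) x = lsmul a (lsmul b x)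
  lsmul_smul : ∀ (c : ℂ) a x, lsmul (c • a) x = c • lsmul a x
  rsmul_add : ∀ x y b, rsmul (x + y) b = rsmul x b + rsmul y b
  add_rsmul : ∀ x a b, rsmul x (a + b) = rsmul x a + rsmul x b
  rsmul_mul : ∀ x a b, rsmul x (a * b) = rsmul (rsmul x a) b
  rsmul_smul : ∀ (c : ℂ) x b, rsmul x (c • b) = c • rsmul x b
  act_comm : ∀ a x b, rsmul (lsmul a x) b = lsmul a (rsmul x b)
  rinner_add_left : ∀ x y z, rinner (x + y) z = rinner x z + rinner y z
  rinner_add_right : ∀ x y z, rinner x (y + z) = rinner x y + rinner x z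
  rinner_smul_right : ∀ (c : ℂ) x y, rinner x (c • y) = c • rinner x y
  rinner_star : ∀ x y, star (rinner x y) = rinner y x
  rinner_rsmul : ∀ x y b, rinner x (rsmul y b) = rinner x y * b
  rinner_pos : ∀ x, ∃ b, rinner x x = star b * b
  linner_add_left : ∀ x y z, linner (x + y) z = linner x z + linner y z
  linner_smul_left : ∀ (c : ℂ) x y, linner (c • x) y = c • linner x y
  linner_star : ∀ x y, star (linner x y) = linner y x
  linner_lsmul : ∀ a x y, linner (lsmul a x) y = a * linner x y
  linner_pos : ∀ x, ∃ a, linner x x = star a * a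
  imprimitivity : ∀ x y z, lsmul (linner x y) z = rsmul x (rinner y z)
  norm_rinner : ∀ x, ‖x‖ ^ 2 = ‖rinner x x‖
  left_full : Dense (↑(Submodule.span ℂ {a : A.carrier | ∃ x y, a = linner x y}) : Set A.carrier)
  right_full : Dense (↑(Submodule.span ℂ {b : B.carrier | ∃ x y, b = rinner x y}) : Set B.carrier)

attribute [instance] ImprimBimod.nacg ImprimBimod.nsp ImprimBimod.complete

/-- Morita equivalence of C*-algebras. -/
def MoritaEq (A B : CStarAlg) : Prop := Nonempty (ImprimBimod A B)

/-- The Rieffel correspondence associated to an `A`–`C`-imprimitivity bimodule `M`: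
the ideal `X–Ind J` of `A` induced from an ideal `J` of `C`. -/
def RieffelIdeal {A C : CStarAlg} (M : ImprimBimod A C) (J : Set C.carrier) :
    Set A.carrier :=
  closure (↑(Submodule.span ℂ
    {a : A.carrier | ∃ x y, ∃ c ∈ J, a = M.linner (M.rsmul x c) y}) : Set A.carrier)

/-- A double centralizer (multiplier) of a C*-algebra, encoded by its pair of
left/right multiplication operators. -/
structure Multiplier (A : CStarAlg) : Type where
  lp : A.carrier →L[ℂ] A.carrier
  rp : A.carrier →L[ℂ] A.carrier
  lp_mul : ∀ a b, lp (a * b) = lp a * b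
  rp_mul : ∀ a b, rp (a * b) = a * rp b
  central_assoc : ∀ a b, a * lp b = rp a * b

/-- A self-adjoint idempotent multiplier. -/
def Multiplier.IsProjection {A : CStarAlg} (p : Multiplier A) : Prop :=
  (∀ a, p.lp (p.lp a) = p.lp a) ∧ (∀ a, p.rp (p.rp a) = p.rp a) ∧
  (∀ a, star (p.lp a) = p.rp (star a))

/-- A central `C₀(X)`-algebra structure on a C*-algebra `A` (this is the usual notion
of a `C₀(X)`-algebra: a nondegenerate central action of `C₀(X)` by multipliers). -/
structure C0Structure (X : Type) [TopologicalSpace X] (A : CStarAlg) : Type 1 where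
  smul : C₀(X, ℂ) → A.carrier → A.carrier
  smul_add : ∀ f a b, smul f (a + b) = smul f a + smul f b
  add_smul : ∀ f g a, smul (f + g) a = smul f a + smul g a
  smul_mul : ∀ f a b, smul f (a * b) = smul f a * b
  mul_smul' : ∀ f a b, smul f (a * b) = a * smul f b
  smul_smul' : ∀ f g a, smul (f * g) a = smul f (smul g a)
  smul_star : ∀ f a, star (smul f a) = smul (star f) (star a)
  norm_smul_le : ∀ f a, ‖smul f a‖ ≤ ‖f‖ * ‖a‖
  nondegenerate :
    Dense (↑(Submodule.span ℂ {a : A.carrier | ∃ f b, a = smul f b}) : Set A.carrier)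

/-! ## Topological groupoids -/

/-- A second countable, locally compact Hausdorff topological groupoid.  The partially
defined multiplication is encoded by a total function `mul` together with the
composability predicate `src x = rng y`; all axioms are imposed only on composable
pairs (the value of `mul` elsewhere is junk). -/
structure LCGroupoid : Type 1 where
  carrier : Type
  [top : TopologicalSpace carrier]
  [t2 : T2Space carrier]
  [lc : LocallyCompactSpace carrier]
  [sc : SecondCountableTopology carrier]
  src : carrier → carrier
  rng : carrier → carrier
  mul : carrier → carrier → carrier
  inv : carrier → carrier
  src_comp : ∀ x y, src x = rng y → src (mul x y) = src y
  rng_comp : ∀ x y, src x = rng y → rng (mul x y) = rng x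
  mul_assoc' : ∀ x y z, src x = rng y → src y = rng z →
    mul (mul x y) z = mul x (mul y z)
  rng_src : ∀ x, rng (src x) = src x
  src_rng : ∀ x, src (rng x) = rng x
  mul_src : ∀ x, mul x (src x) = x
  rng_mul : ∀ x, mul (rng x) x = x
  inv_invol : ∀ x, inv (inv x) = x
  src_inv : ∀ x, src (inv x) = rng x
  rng_inv : ∀ x, rng (inv x) = src x
  mul_inv : ∀ x, mul x (inv x) = rng x
  inv_mul : ∀ x, mul (inv x) x = src x
  continuous_src : Continuous src
  continuous_rng : Continuous rng
  continuous_inv : Continuous inv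
  continuous_mul :
    ContinuousOn (fun p : carrier × carrier => mul p.1 p.2) {p | src p.1 = rng p.2}

attribute [instance] LCGroupoid.top LCGroupoid.t2 LCGroupoid.lc LCGroupoid.sc

/-- The unit space `G⁽⁰⁾`. -/
def LCGroupoid.unitSpace (G : LCGroupoid) : Set G.carrier := {u | G.rng u = u}

/-- Composability of a pair of arrows. -/
def LCGroupoid.composable (G : LCGroupoid) (x y : G.carrier) : Prop := G.src x = G.rng y

/-- A subset of the unit space is invariant when it is saturated for the orbit
equivalence relation. -/
def LCGroupoid.InvariantSet (G : LCGroupoid) (U : Set G.carrier) : Prop :=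
  ∀ x : G.carrier, G.src x ∈ U ↔ G.rng x ∈ U

/-- Cast along an equality of base points of a fiber family. -/
def hcast {α : Type} {F : α → Type} {x y : α} (h : x = y) : F x → F y :=
  fun b => h ▸ b

instance grpdMeasurableSpace (G : LCGroupoid) : MeasurableSpace G.carrier :=
  borel G.carrier

/-- A (continuous left) Haar system on a groupoid: measures `λ^u` supported on the
range fibers, left invariant, and continuous against compactly supported functions. -/
structure HaarSystem (G : LCGroupoid) : Type 1 where
  meas : G.carrier → MeasureTheory.Measure G.carrier
  supported : ∀ u ∈ G.unitSpace, meas u ((G.rng ⁻¹' {u})ᶜ) = 0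
  nonzero : ∀ u ∈ G.unitSpace, meas u ≠ 0
  invariant : ∀ x : G.carrier,
    (meas (G.src x)).map (fun y => G.mul x y) = meas (G.rng x)
  continuous_integral : ∀ f : G.carrier → ℝ, Continuous f → HasCompactSupport f →
    Continuous fun u => ∫ y, f y ∂(meas u)

/-- (Measurewise) amenability of `(G, λ)`, expressed by the existence of an approximate
invariant mean: a sequence of nonnegative continuous compactly supported functions
whose fiberwise integrals are ≤ 1, tend to 1, and which is asymptotically invariant,
uniformly on compact sets. -/
def MeasurewiseAmenable (G : LCGroupoid) (μ : HaarSystem G) : Prop :=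
  ∃ g : ℕ → G.carrier → ℝ,
    (∀ n, Continuous (g n)) ∧ (∀ n, HasCompactSupport (g n)) ∧
    (∀ n x, 0 ≤ g n x) ∧
    (∀ n u, ∫ y, g n y ∂(μ.meas (G.rng u)) ≤ 1) ∧
    ∀ K : Set G.carrier, IsCompact K → ∀ ε : ℝ, 0 < ε → ∃ N : ℕ, ∀ n ≥ N, ∀ x ∈ K,
      |(∫ y, g n y ∂(μ.meas (G.rng x))) - 1| < ε ∧
      (∫ y, |g n (G.mul (G.inv x) y) - g n y| ∂(μ.meas (G.rng x))) < ε

/-! ## Groupoid dynamical systems and exact groupoids -/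

/-- A groupoid dynamical system `(𝒜, G, α)`: an upper semicontinuous C*-bundle over
`G⁽⁰⁾` (recorded through its fiber algebras and its section C*-algebra
`A = Γ₀(G⁽⁰⁾, 𝒜)`) together with a fiberwise action of `G`.  The reduced crossed
product `𝒜 ⋊_{α,r} G` is recorded as data. -/
structure DynSys (G : LCGroupoid) (μ : HaarSystem G) : Type 1 where
  Fib : G.carrier → CStarAlg
  act : ∀ x : G.carrier, (Fib (G.src x)).carrier ≃⋆ₐ[ℂ] (Fib (G.rng x)).carrier
  sect : CStarAlg
  eval : ∀ u : G.carrier, sect.carrier →⋆ₙₐ[ℂ] (Fib u).carrier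
  eval_surjective : ∀ u ∈ G.unitSpace, Function.Surjective (eval u)
  red : CStarAlg

/-- The fiber `I(u)` of an ideal `I ⊆ A = Γ₀(G⁽⁰⁾, 𝒜)`. -/
def dynFiberIdeal {G : LCGroupoid} {μ : HaarSystem G} (D : DynSys G μ)
    (I : Set D.sect.carrier) (u : G.carrier) : Set (D.Fib u).carrier :=
  closure (D.eval u '' I)

/-- An invariant ideal of a groupoid dynamical system:
`α_x(I(s(x))) = I(r(x))` for all `x ∈ G`. -/
def DynSys.IsInvariantIdeal {G : LCGroupoid} {μ : HaarSystem G} (D : DynSys G μ)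
    (I : Set D.sect.carrier) : Prop :=
  IsCStarIdeal D.sect I ∧
    ∀ x : G.carrier, D.act x '' dynFiberIdeal D I (G.src x) = dynFiberIdeal D I (G.rng x)

/-- The canonical sequence `0 → 𝓘 ⋊_r G → 𝒜 ⋊_r G → 𝒜/𝓘 ⋊_r G → 0` of reduced crossed
products associated to an invariant ideal (the outer algebras and maps are the canonical
ones, recorded as data). -/
structure RedCPSeq {G : LCGroupoid} {μ : HaarSystem G} (D : DynSys G μ)
    (I : Set D.sect.carrier) : Type 1 where
  redI : CStarAlg      -- `𝓘 ⋊_{α,r} G`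
  redQ : CStarAlg      -- `𝒜/𝓘 ⋊_{α,r} G`
  ι : redI.carrier →⋆ₙₐ[ℂ] D.red.carrier
  π : D.red.carrier →⋆ₙₐ[ℂ] redQ.carrier

/-- Exactness for a groupoid `G` (with Haar system): for every separable groupoid
dynamical system `(𝒜, G, α)` and every invariant ideal `I` of `Γ₀(G⁽⁰⁾, 𝒜)`, the
associated sequence of reduced crossed products is exact. -/
def ExactGroupoid (G : LCGroupoid) (μ : HaarSystem G) : Prop :=
  ∀ D : DynSys G μ, TopologicalSpace.SeparableSpace D.sect.carrier →
    ∀ I : Set D.sect.carrier, D.IsInvariantIdeal I →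
      ∀ S : RedCPSeq D I, IsSES S.ι S.π

/-- The canonical sequence `0 → C_r*(G|_U) → C_r*(G) → C_r*(G|_F) → 0` of reduced
groupoid C*-algebras associated to an open invariant subset `U` of the unit space
(recorded as data). -/
structure RedRestrictionSeq (G : LCGroupoid) (μ : HaarSystem G)
    (U : Set G.carrier) : Type 1 where
  redU : CStarAlg       -- `C_r*(G|_U)`
  redG : CStarAlg       -- `C_r*(G)`
  redF : CStarAlg       -- `C_r*(G|_F)`, `F = G⁽⁰⁾ \ U`
  ι : redU.carrier →⋆ₙₐ[ℂ] redG.carrier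
  π : redG.carrier →⋆ₙₐ[ℂ] redF.carrier

/-- Inner exactness of a groupoid. -/
def InnerExact (G : LCGroupoid) (μ : HaarSystem G) : Prop :=
  ∀ U : Set G.carrier, U ⊆ G.unitSpace → IsOpen U → G.InvariantSet U →
    ∀ S : RedRestrictionSeq G μ U, IsSES S.ι S.π

/-! ## Fell bundles -/

/-- Compactly supported continuous sections of a fiber family with total-space
topology `τ`. -/
def IsCcSection {ι : Type} [TopologicalSpace ι] {F : ι → Type}
    [∀ i, NormedAddCommGroup (F i)] (τ : TopologicalSpace (Σ i, F i))
    (f : ∀ i, F i) : Prop :=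
  @Continuous ι (Σ i, F i) _ τ (fun i => ⟨i, f i⟩) ∧
    IsCompact (closure {i | f i ≠ 0})

/-- A Fell bundle `p : ℬ → G` over a groupoid with Haar system.  The upper
semicontinuous Banach bundle is recorded through its fibers and total-space topology;
the multiplication and involution are recorded fiberwise.  The associated unit
C*-algebra `A = Γ₀(G⁽⁰⁾, ℬ)`, full C*-algebra `C*(G, ℬ)`, and reduced C*-algebra
`C_r*(G, ℬ)` are recorded as data, together with the canonical maps relating them. -/
structure FellBundle (G : LCGroupoid) (μ : HaarSystem G) : Type 1 where
  Fiber : G.carrier → Type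
  [fibNorm : ∀ x, NormedAddCommGroup (Fiber x)]
  [fibMod : ∀ x, NormedSpace ℂ (Fiber x)]
  [fibComplete : ∀ x, CompleteSpace (Fiber x)]
  totalTop : TopologicalSpace (Σ x, Fiber x)
  bmul : ∀ x y : G.carrier, Fiber x → Fiber y → Fiber (G.mul x y)
  binv : ∀ x : G.carrier, Fiber x → Fiber (G.inv x)
  norm_bmul : ∀ (x y : G.carrier) (b : Fiber x) (c : Fiber y),
    ‖bmul x y b c‖ ≤ ‖b‖ * ‖c‖
  norm_binv : ∀ (x : G.carrier) (b : Fiber x), ‖binv x b‖ = ‖b‖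
  unitAlg : CStarAlg                      -- `A = Γ₀(G⁽⁰⁾, ℬ)`
  eval : ∀ u : G.carrier, unitAlg.carrier →ₗ[ℂ] Fiber u
  full : CStarAlg                         -- `C*(G, ℬ)`
  reduced : CStarAlg                      -- `C_r*(G, ℬ)`
  redQuot : full.carrier →⋆ₙₐ[ℂ] reduced.carrier
  redQuot_surjective : Function.Surjective redQuot
  secMapRed : (∀ x, Fiber x) → reduced.carrier
  secMapRed_dense :
    Dense (secMapRed '' {f | IsCcSection totalTop f})

attribute [instance] FellBundle.fibNorm FellBundle.fibMod FellBundle.fibComplete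

/-- Separability of a Fell bundle: every fiber is a separable Banach space. -/
def FellBundle.Separable {G : LCGroupoid} {μ : HaarSystem G}
    (B : FellBundle G μ) : Prop :=
  ∀ x : G.carrier, TopologicalSpace.SeparableSpace (B.Fiber x)

/-- Saturation of a Fell bundle: `B(x)·B(y)` spans a dense subspace of `B(xy)`. -/
def FellBundle.Saturated {G : LCGroupoid} {μ : HaarSystem G}
    (B : FellBundle G μ) : Prop :=
  ∀ x y : G.carrier, G.composable x y →
    Dense (↑(Submodule.span ℂ
      {d : B.Fiber (G.mul x y) | ∃ b c, d = B.bmul x y b c}) : Set (B.Fiber (G.mul x y)))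

/-- The fiber `I(u) ⊆ B(u)` of an ideal `I` of the unit C*-algebra. -/
def fbFiberIdeal {G : LCGroupoid} {μ : HaarSystem G} (B : FellBundle G μ)
    (I : Set B.unitAlg.carrier) (u : G.carrier) : Set (B.Fiber u) :=
  closure (B.eval u '' I)

/-- The Rieffel correspondence `h_x` induced by the `B(r(x))`–`B(s(x))`-imprimitivity
bimodule `B(x)`, applied to an ideal of the fiber `B(s(x))`: the closed span of the
elements `_{B(r(x))}⟨b·j, c⟩ = (b j) c*` with `j ∈ J`. -/
def fbRieffelMap {G : LCGroupoid} {μ : HaarSystem G} (B : FellBundle G μ)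
    (x : G.carrier) (J : Set (B.Fiber (G.src x))) : Set (B.Fiber (G.rng x)) :=
  closure (↑(Submodule.span ℂ
    {d : B.Fiber (G.rng x) | ∃ (b c : B.Fiber x), ∃ j ∈ J,
      d = hcast (F := B.Fiber) (G.mul_inv x)
        (B.bmul x (G.inv x)
          (hcast (F := B.Fiber) (G.mul_src x) (B.bmul x (G.src x) b j))
          (B.binv x c))}) : Set (B.Fiber (G.rng x)))

/-- Invariance of an ideal `I` of the unit C*-algebra of a Fell bundle: the fibers of
`I` are matched up by the Rieffel correspondences of the imprimitivity bimodules
`B(x)` (equivalently, `hull(I)` is a `G`-invariant subset of `Prim A`). -/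
def FellBundle.IsInvariantIdeal {G : LCGroupoid} {μ : HaarSystem G}
    (B : FellBundle G μ) (I : Set B.unitAlg.carrier) : Prop :=
  IsCStarIdeal B.unitAlg I ∧
    ∀ x : G.carrier, fbRieffelMap B x (fbFiberIdeal B I (G.src x)) =
      fbFiberIdeal B I (G.rng x)

/-- The canonical data associated to an invariant ideal `I` of the unit C*-algebra of
a Fell bundle `ℬ`: the ideal Fell bundle `ℬ_I` (with `Γ₀(G⁽⁰⁾, ℬ_I) = I`), the
quotient Fell bundle `ℬ^I` (with `Γ₀(G⁽⁰⁾, ℬ^I) = A/I`), the fiberwise inclusions and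
quotient maps, and the induced maps of full and reduced C*-algebras. -/
structure IdealQuotientData {G : LCGroupoid} {μ : HaarSystem G}
    (B : FellBundle G μ) (I : Set B.unitAlg.carrier) : Type 1 where
  sub : FellBundle G μ        -- `ℬ_I`
  quot : FellBundle G μ       -- `ℬ^I`
  subFiberMap : ∀ x : G.carrier, sub.Fiber x →ₗ[ℂ] B.Fiber x
  subFiberMap_injective : ∀ x, Function.Injective (subFiberMap x)
  quotFiberMap : ∀ x : G.carrier, B.Fiber x →ₗ[ℂ] quot.Fiber x
  quotFiberMap_surjective : ∀ x, Function.Surjective (quotFiberMap x)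
  unitInc : sub.unitAlg.carrier →⋆ₙₐ[ℂ] B.unitAlg.carrier
  unitInc_injective : Function.Injective unitInc
  unitInc_range : Set.range unitInc = I          -- `Γ₀(G⁽⁰⁾, ℬ_I) = I`
  unitQuot : B.unitAlg.carrier →⋆ₙₐ[ℂ] quot.unitAlg.carrier
  unitQuot_surjective : Function.Surjective unitQuot
  unitQuot_ker : {a | unitQuot a = 0} = I        -- `Γ₀(G⁽⁰⁾, ℬ^I) = A/I`
  ιred : sub.reduced.carrier →⋆ₙₐ[ℂ] B.reduced.carrier
  πred : B.reduced.carrier →⋆ₙₐ[ℂ] quot.reduced.carrier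
  ιfull : sub.full.carrier →⋆ₙₐ[ℂ] B.full.carrier
  πfull : B.full.carrier →⋆ₙₐ[ℂ] quot.full.carrier

/-! ## Equivalences of Fell bundles over the trivial `G`–`G`-equivalence -/

/-- A `ℬ`–`𝒟`-equivalence over the trivial `G`–`G`-equivalence `Z = G`: an upper
semicontinuous Banach bundle `q : ℰ → G` with commuting left `ℬ`- and right
`𝒟`-actions and `ℬ`- and `𝒟`-valued sesquilinear forms making each fiber `E(z)` a
`B(r(z))`–`D(s(z))`-imprimitivity bimodule.  The associated
`Γ₀(G⁽⁰⁾, ℬ)`–`Γ₀(G⁽⁰⁾, 𝒟)`-imprimitivity bimodule `E = Γ₀(G⁽⁰⁾, ℰ|_{G⁽⁰⁾})` is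
recorded as `unitBimod`. -/
structure FellEquivData {G : LCGroupoid} {μ : HaarSystem G}
    (B D : FellBundle G μ) : Type 1 where
  EFib : G.carrier → Type
  [eNorm : ∀ x, NormedAddCommGroup (EFib x)]
  [eMod : ∀ x, NormedSpace ℂ (EFib x)]
  [eComplete : ∀ x, CompleteSpace (EFib x)]
  totalTop : TopologicalSpace (Σ x, EFib x)
  lact : ∀ x y : G.carrier, B.Fiber x → EFib y → EFib (G.mul x y)
  ract : ∀ x y : G.carrier, EFib x → D.Fiber y → EFib (G.mul x y)
  linner : ∀ x y : G.carrier, EFib x → EFib y → B.Fiber (G.mul x (G.inv y))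
  rinner : ∀ x y : G.carrier, EFib x → EFib y → D.Fiber (G.mul (G.inv x) y)
  norm_rinner : ∀ (x : G.carrier) (e : EFib x), ‖e‖ ^ 2 = ‖rinner x x e e‖
  unitBimod : ImprimBimod B.unitAlg D.unitAlg

attribute [instance] FellEquivData.eNorm FellEquivData.eMod FellEquivData.eComplete

/-- The subbundle `ℰ_{I,J}` determined fiberwise by
`E_{I,J}(x) = {e ∈ E(x) : ⟨e, e⟩_𝒟 ∈ D_J(s(x))}`. -/
def FellEquivData.subFiber {G : LCGroupoid} {μ : HaarSystem G}
    {B D : FellBundle G μ} (E : FellEquivData B D) (J : Set D.unitAlg.carrier)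
    (x : G.carrier) : Set (E.EFib x) :=
  {e | hcast (F := D.Fiber) (G.inv_mul x) (E.rinner x x e e) ∈
    fbFiberIdeal D J (G.src x)}

/-! ## Extensions of groupoids -/

/-- An extension `G⁽⁰⁾ → S → E → G → G⁽⁰⁾` of locally compact groupoids:
`i` is a homeomorphism onto a closed subgroupoid of `E` contained in the isotropy,
and `j` is a continuous open surjective homomorphism with `range i = j⁻¹(G⁽⁰⁾)`. -/
structure GrpdExtension (S E G : LCGroupoid) : Type 1 where
  i : S.carrier → E.carrier
  j : E.carrier → G.carrier
  i_closedEmbedding : Topology.IsClosedEmbedding i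
  i_src : ∀ s, E.src (i s) = i (S.src s)
  i_rng : ∀ s, E.rng (i s) = i (S.rng s)
  i_mul : ∀ s t, S.composable s t → i (S.mul s t) = E.mul (i s) (i t)
  i_isotropy : ∀ s, E.src (i s) = E.rng (i s)
  j_continuous : Continuous j
  j_open : IsOpenMap j
  j_surjective : Function.Surjective j
  j_src : ∀ e, j (E.src e) = G.src (j e)
  j_rng : ∀ e, j (E.rng e) = G.rng (j e)
  j_mul : ∀ e f, E.composable e f → j (E.mul e f) = G.mul (j e) (j f)
  range_i : Set.range i = j ⁻¹' G.unitSpace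
  j_unit_injOn : Set.InjOn j E.unitSpace

/-- The Haar system `ν` on `E` induced by Haar systems on `S` and `G`:
`∫_E f dν^u = ∫_G ∫_S f(e′ g) dμ^{s(e′)}(g) dλ^u(j(e′))`. -/
def InducedHaar {S E G : LCGroupoid} (ext : GrpdExtension S E G)
    (μS : HaarSystem S) (μG : HaarSystem G) (ν : HaarSystem E) : Prop :=
  ∀ f : E.carrier → ℝ, Continuous f → HasCompactSupport f →
    ∀ F : G.carrier → ℝ,
      (∀ (e' : E.carrier) (uS : S.carrier), uS ∈ S.unitSpace →
        ext.i uS = E.src e' →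
        F (ext.j e') = ∫ g, f (E.mul e' (ext.i g)) ∂(μS.meas uS)) →
      ∀ u ∈ E.unitSpace, ∫ e, f e ∂(ν.meas u) = ∫ x, F x ∂(μG.meas (ext.j u))

/-! ## Twisted systems and twists -/

/-- A twisted groupoid dynamical system `(𝒜, G, E, α)`, recorded through the central
extension `G⁽⁰⁾ → S → E' → G → G⁽⁰⁾` (with `S` an abelian group bundle), the section
algebra `A = Γ₀(G⁽⁰⁾, 𝒜)`, and the associated Fell bundle `ℬ = (r*𝒜)/S` over `G`
(whose unit C*-algebra is identified with `A`).  Following the paper, the full and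
reduced twisted crossed products `C*(G, E, 𝒜)` and `C_r*(G, E, 𝒜)` are, by definition,
`C*(G, ℬ)` and `C_r*(G, ℬ)`. -/
structure TwistedDynSys (G : LCGroupoid) (μ : HaarSystem G) : Type 1 where
  S : LCGroupoid
  E' : LCGroupoid
  ext : GrpdExtension S E' G
  group_bundle : ∀ s : S.carrier, S.src s = S.rng s
  abelian : ∀ s t : S.carrier, S.rng s = S.rng t → S.mul s t = S.mul t s
  central : ∀ (e : E'.carrier) (s : S.carrier), E'.src e = E'.rng e →
    E'.src e = E'.rng (ext.i s) → E'.mul e (ext.i s) = E'.mul (ext.i s) e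
  A : CStarAlg                           -- `A = Γ₀(G⁽⁰⁾, 𝒜)`
  bundle : FellBundle G μ                -- `ℬ = (r*𝒜)/S`
  unitIso : bundle.unitAlg.carrier ≃⋆ₐ[ℂ] A.carrier

/-- The full twisted crossed product `C*(G, E, 𝒜)`. -/
def TwistedDynSys.fullCrossed {G : LCGroupoid} {μ : HaarSystem G}
    (T : TwistedDynSys G μ) : CStarAlg := T.bundle.full

/-- The reduced twisted crossed product `C_r*(G, E, 𝒜)`. -/
def TwistedDynSys.redCrossed {G : LCGroupoid} {μ : HaarSystem G}
    (T : TwistedDynSys G μ) : CStarAlg := T.bundle.reduced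

/-- A twist `Σ` over `G`: the twisted dynamical system associated to the trivial
bundle `ℂ × G⁽⁰⁾`, where the kernel `S` of the central extension is the trivial
circle bundle `G⁽⁰⁾ × 𝕋`.  Its C*-algebras are `C*(G, Σ)` and `C_r*(G, Σ)`. -/
structure TwistOver (G : LCGroupoid) (μ : HaarSystem G) : Type 1 where
  T : TwistedDynSys G μ
  circleParam : {u : G.carrier // u ∈ G.unitSpace} × Circle → T.S.carrier
  circleParam_bijective : Function.Bijective circleParam
  circleParam_continuous : Continuous circleParam
  circleParam_mul : ∀ (u : {u : G.carrier // u ∈ G.unitSpace}) (z w : Circle),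
    circleParam (u, z * w) = T.S.mul (circleParam (u, z)) (circleParam (u, w))
  trivIso : T.A.carrier ≃⋆ₐ[ℂ] C₀({u : G.carrier // u ∈ G.unitSpace}, ℂ)

/-! ## Orbit space -/

/-- The orbit equivalence relation on the unit space. -/
def orbitSetoid (G : LCGroupoid) : Setoid {u : G.carrier // u ∈ G.unitSpace} where
  r u v := ∃ x : G.carrier, G.src x = u.1 ∧ G.rng x = v.1
  iseqv := by
    constructor
    · rintro ⟨u, hu⟩
      refine ⟨u, ?_, hu⟩
      have : G.src u = G.src (G.rng u) := by rw [hu]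
      rw [this, G.src_rng, hu]
    · rintro ⟨u, hu⟩ ⟨v, hv⟩ ⟨x, hx1, hx2⟩
      exact ⟨G.inv x, by rw [G.src_inv, hx2], by rw [G.rng_inv, hx1]⟩
    · rintro ⟨u, hu⟩ ⟨v, hv⟩ ⟨w, hw⟩ ⟨x, hx1, hx2⟩ ⟨y, hy1, hy2⟩
      refine ⟨G.mul y x, ?_, ?_⟩
      · rw [G.src_comp y x (by rw [hy1, hx2]), hx1]
      · rw [G.rng_comp y x (by rw [hy1, hx2]), hy2]

/-- The orbit space `G\G⁽⁰⁾`. -/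
def OrbitSpace (G : LCGroupoid) : Type := Quotient (orbitSetoid G)

instance (G : LCGroupoid) : TopologicalSpace (OrbitSpace G) :=
  instTopologicalSpaceQuotient

/-- The orbit `[u]` of a unit. -/
def orbitOf (G : LCGroupoid) (u : {u : G.carrier // u ∈ G.unitSpace}) : OrbitSpace G :=
  Quotient.mk (orbitSetoid G) u

namespace ImprimBimod

variable {A B : CStarAlg} (M : ImprimBimod A B)

lemma zero_lsmul' (x : M.X) : M.lsmul 0 x = 0 := by
  simpa using M.add_lsmul 0 0 x

lemma rsmul_zero' (x : M.X) : M.rsmul x 0 = 0 := by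
  simpa using M.add_rsmul x 0 0

lemma rinner_zero_right' (x : M.X) : M.rinner x 0 = 0 := by
  simpa using M.rinner_add_right x 0 0

lemma linner_zero_left' (y : M.X) : M.linner 0 y = 0 := by
  simpa using M.linner_add_left 0 0 y

/-- The imprimitivity identity moves an element of `A` squeezed between two left inner products
into a right inner product. -/
lemma linner_mul_mul_linner (a : A.carrier) (x y x' y' : M.X) :
    M.linner x y * a * M.linner x' y' = M.linner (M.rsmul x (M.rinner y (M.lsmul a x'))) y' := by
  rw [← M.imprimitivity, M.linner_lsmul, M.linner_lsmul, mul_assoc]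

end ImprimBimod

/-- If `S` spans a dense subspace of a C*-algebra and `S a S` lies in a closed subspace `K`, then
`a ∈ K`: density gives `A a A ⊆ K`, and an approximate unit recovers `a`. -/
lemma mem_of_forall_mul_mul_mem {A : Type*} [NonUnitalCStarAlgebra A] {S : Set A}
    (hS : Dense (↑(Submodule.span ℂ S) : Set A)) {K : Submodule ℂ A} (hK : IsClosed (K : Set A))
    {a : A} (h : ∀ s ∈ S, ∀ t ∈ S, s * a * t ∈ K) : a ∈ K := by
  have h_right : ∀ s ∈ S, ∀ t, s * a * t ∈ K := by
    intro s hs t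
    have hle : Submodule.span ℂ S ≤ K.comap (LinearMap.mulLeft ℂ (s * a)) :=
      Submodule.span_le.2 fun t ht => h s hs t ht
    exact (hK.preimage (continuous_const_mul (s * a))).closure_subset_iff.2 hle (hS t)
  have h_both : ∀ s t, s * a * t ∈ K := by
    intro s t
    have hle : Submodule.span ℂ S ≤
        K.comap (LinearMap.mulRight ℂ t ∘ₗ LinearMap.mulRight ℂ a) :=
      Submodule.span_le.2 fun s hs => h_right s hs t
    have hc : Continuous fun s : A => s * a * t := by fun_prop
    exact (hK.preimage hc).closure_subset_iff.2 hle (hS s)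
  -- The spectral order is the order for which Mathlib's canonical approximate unit is available.
  let _ := CStarAlgebra.spectralOrder A
  have _ := CStarAlgebra.spectralOrderedRing A
  have hu := (CStarAlgebra.increasingApproximateUnit A).toIsApproximateUnit
  have h_left : ∀ s, s * a ∈ K := fun s =>
    hK.mem_of_tendsto (hu.tendsto_mul_left (s * a)) (.of_forall fun t => h_both s t)
  exact hK.mem_of_tendsto (hu.tendsto_mul_right a) (.of_forall h_left)

/-- Let `A` and `B` be C*-algebras with ideals `I ⊆ A` and `J ⊆ B`,
let `X` be an `A`–`B`-imprimitivity bimodule and `Y` an `(A/I)`–`(B/J)`-imprimitivity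
bimodule, and suppose there is a surjective linear map `q : X → Y` satisfying
`q(a·x) = p^A(a)·q(x)`, `q(x·b) = q(x)·p^B(b)`, `p^A(⟨x,y⟩_A) = ⟨q(x),q(y)⟩_{A/I}`,
and `p^B(⟨x,y⟩_B) = ⟨q(x),q(y)⟩_{B/J}` for all `x, y ∈ X`, `a ∈ A`, `b ∈ B`, where
`p^A : A → A/I` and `p^B : B → B/J` are the quotient maps.  Then `I` and `J` are
paired under the Rieffel correspondence associated to `X`, i.e. `I = X–Ind J`. -/
theorem stmt_19 (A B : CStarAlg) (I : Set A.carrier) (J : Set B.carrier)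
    (hI : IsCStarIdeal A I) (hJ : IsCStarIdeal B J)
    (Aq Bq : CStarAlg)
    (pA : A.carrier →⋆ₙₐ[ℂ] Aq.carrier) (pB : B.carrier →⋆ₙₐ[ℂ] Bq.carrier)
    (hpA_surj : Function.Surjective pA) (hpA_ker : {a : A.carrier | pA a = 0} = I)
    (hpB_surj : Function.Surjective pB) (hpB_ker : {b : B.carrier | pB b = 0} = J)
    (X : ImprimBimod A B) (Y : ImprimBimod Aq Bq)
    (q : X.X →ₗ[ℂ] Y.X) (hq_surj : Function.Surjective q)
    (hq_l : ∀ a x, q (X.lsmul a x) = Y.lsmul (pA a) (q x))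
    (hq_r : ∀ x b, q (X.rsmul x b) = Y.rsmul (q x) (pB b))
    (hq_linner : ∀ x y, pA (X.linner x y) = Y.linner (q x) (q y))
    (hq_rinner : ∀ x y, pB (X.rinner x y) = Y.rinner (q x) (q y)) :
    RieffelIdeal X J = I := by
  have memI : ∀ a, a ∈ I ↔ pA a = 0 := fun a => by rw [← hpA_ker]; rfl
  have memJ : ∀ b, b ∈ J ↔ pB b = 0 := fun b => by rw [← hpB_ker]; rfl
  apply Set.Subset.antisymm
  · refine closure_minimal (fun a ha => ?_) hI.isClosed
    induction ha using Submodule.span_induction with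
    | mem a ha =>
      obtain ⟨x, y, c, hc, rfl⟩ := ha
      rw [memI, hq_linner, hq_r, (memJ c).1 hc, Y.rsmul_zero', Y.linner_zero_left']
    | zero => exact hI.zero_mem
    | add a b _ _ ha hb => exact hI.add_mem ha hb
    | smul c a _ ha => exact hI.smul_mem c ha
  · intro a ha
    refine mem_of_forall_mul_mul_mem X.left_full
      (K := (Submodule.span ℂ
        {a | ∃ x y, ∃ c ∈ J, a = X.linner (X.rsmul x c) y}).topologicalClosure)
      (Submodule.isClosed_topologicalClosure _) ?_
    rintro _ ⟨x, y, rfl⟩ _ ⟨x', y', rfl⟩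
    refine Submodule.le_topologicalClosure _ (Submodule.subset_span
      ⟨x, y', _, ?_, X.linner_mul_mul_linner a x y x' y'⟩)
    rw [memJ, hq_rinner, hq_l, (memI a).1 ha, Y.zero_lsmul', Y.rinner_zero_right']

end FellPaper
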